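/- Let k be a continuous probability density with support [−1,1] that is strictly positive on (−1,1); for s ∈ (−1,1] let (φ(s), ψ(s)) be the solution of φ(s)∫_{−1}^s k(u)du + ψ(s)∫_{−1}^s u·k(u)du = 1 and φ(s)∫_{−1}^s u·k(u)du + ψ(s)∫_{−1}^s u²k(u)du = 0, and set k^{(s)}(u) = φ(s)k(u) + ψ(s)u·k(u). Let λ : ℝ → ℝ be bounded and uniformly continuous. Then sup_{x ∈ [0, b]} | ∫_{−1}^{x/b} k^{(x/b)}(y)·λ(x − b·y) dy − λ(x) | → 0 as b → 0+. -/

import Mathlib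

open MeasureTheory Filter Set

lemma bk_coef_bound
    (k : ℝ → ℝ) (hkcont : Continuous k) (hk0 : ∀ u, 0 ≤ k u)
    (hkpos : ∀ u ∈ Set.Ioo (-1 : ℝ) 1, 0 < k u) :
    ∃ M : ℝ, 0 ≤ M ∧ ∀ s ∈ Set.Icc (0 : ℝ) 1, ∀ p q : ℝ,
      p * (∫ u in Set.Icc (-1 : ℝ) s, k u)
        + q * (∫ u in Set.Icc (-1 : ℝ) s, u * k u) = 1 →
      p * (∫ u in Set.Icc (-1 : ℝ) s, u * k u)
        + q * (∫ u in Set.Icc (-1 : ℝ) s, u ^ 2 * k u) = 0 → |p| ≤ M ∧ |q| ≤ M := by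
  obtain ⟨z, hz, hzmin⟩ := (isCompact_Icc (a := (-3/4 : ℝ)) (b := -1/4)).exists_isMinOn
    (nonempty_Icc.2 (by norm_num)) hkcont.continuousOn
  have hm : 0 < k z := hkpos z ⟨by linarith [hz.1], by linarith [hz.2]⟩
  set m := k z with hmdef
  refine ⟨150 / m, by positivity, ?_⟩
  intro s hs p q h1 h2
  have i0 : IntegrableOn k (Icc (-1) s) := hkcont.integrableOn_Icc
  have i1 : IntegrableOn (fun u => u * k u) (Icc (-1) s) :=
    Continuous.integrableOn_Icc (by fun_prop)
  have i2 : IntegrableOn (fun u => u ^ 2 * k u) (Icc (-1) s) :=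
    Continuous.integrableOn_Icc (by fun_prop)
  have e1 : ∫ u in Icc (-1 : ℝ) s, (p + q * u) ^ 2 * k u = p := by
    have : ∀ u, (p + q * u) ^ 2 * k u
        = (p ^ 2 * k u + (2 * p * q) * (u * k u)) + q ^ 2 * (u ^ 2 * k u) := by
      intro u; ring
    simp_rw [this]
    rw [integral_add (f := fun u => p ^ 2 * k u + (2 * p * q) * (u * k u))
        ((i0.const_mul _).add (i1.const_mul _)) (i2.const_mul _),
      integral_add (i0.const_mul _) (i1.const_mul _), integral_const_mul, integral_const_mul,
      integral_const_mul]
    linear_combination p * h1 + q * h2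
  have e2 : ∫ u in Icc (-3/4 : ℝ) (-1/4), (p + q * u) ^ 2 * m
      = m * ((p - q / 2) ^ 2 / 2 + q ^ 2 / 96) := by
    rw [integral_Icc_eq_integral_Ioc, ← intervalIntegral.integral_of_le (by norm_num)]
    have : ∀ u ∈ uIcc (-3/4 : ℝ) (-1/4), HasDerivAt
        (fun u : ℝ => m * (p ^ 2 * u + p * q * u ^ 2 + q ^ 2 / 3 * u ^ 3))
        ((p + q * u) ^ 2 * m) u := by
      intro u _
      have := ((((hasDerivAt_id u).const_mul (p ^ 2)).add
        ((hasDerivAt_pow 2 u).const_mul (p * q))).add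
        ((hasDerivAt_pow 3 u).const_mul (q ^ 2 / 3))).const_mul m
      refine this.congr_deriv ?_
      norm_num
      ring
    rw [intervalIntegral.integral_eq_sub_of_hasDerivAt this
      (Continuous.intervalIntegrable (by fun_prop) _ _)]
    ring
  have e3 : ∫ u in Icc (-3/4 : ℝ) (-1/4), (p + q * u) ^ 2 * m ≤
      ∫ u in Icc (-3/4 : ℝ) (-1/4), (p + q * u) ^ 2 * k u :=
    setIntegral_mono_on (Continuous.integrableOn_Icc (by fun_prop))
      (Continuous.integrableOn_Icc (by fun_prop)) measurableSet_Icc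
      (fun u hu => mul_le_mul_of_nonneg_left (hzmin hu) (sq_nonneg _))
  have e4 : ∫ u in Icc (-3/4 : ℝ) (-1/4), (p + q * u) ^ 2 * k u ≤
      ∫ u in Icc (-1 : ℝ) s, (p + q * u) ^ 2 * k u :=
    setIntegral_mono_set (Continuous.integrableOn_Icc (by fun_prop))
      (Eventually.of_forall fun u => mul_nonneg (sq_nonneg _) (hk0 u))
      (Icc_subset_Icc (by norm_num) (by linarith [hs.1])).eventuallyLE
  have e5 : m * ((p - q / 2) ^ 2 / 2 + q ^ 2 / 96) ≤ p := by linarith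
  have e6' : (p ^ 2 + q ^ 2) / 150 ≤ (p - q / 2) ^ 2 / 2 + q ^ 2 / 96 := by
    nlinarith [sq_nonneg (p - q), sq_nonneg q, sq_nonneg (p - q / 2)]
  have e6 : m * ((p ^ 2 + q ^ 2) / 150) ≤ p :=
    (mul_le_mul_of_nonneg_left e6' hm.le).trans e5
  have e7 : p ^ 2 + q ^ 2 ≤ 150 / m * p := by
    rw [div_mul_eq_mul_div, le_div_iff₀ hm]; linarith
  have hM : 0 < 150 / m := by positivity
  constructor
  · refine abs_le_of_sq_le_sq ?_ hM.le
    nlinarith [sq_nonneg q, sq_nonneg (p - 150 / m)]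
  · refine abs_le_of_sq_le_sq ?_ hM.le
    nlinarith [sq_nonneg p, sq_nonneg (p - 150 / m), sq_nonneg (p - 150 / m / 2)]

/-- Uniform bias convergence near the left boundary: with boundary kernel
`k^{(s)}(u) = φ(s)k(u) + ψ(s)u k(u)` (coefficients solving the boundary system) and `λ`
bounded and uniformly continuous,
`sup_{x ∈ [0,b]} |∫_{-1}^{x/b} k^{(x/b)}(y) λ(x - by) dy - λ(x)| → 0` as `b → 0+`. -/
theorem boundary_kernel_uniform_bias
    (k : ℝ → ℝ) (hkcont : Continuous k) (hk0 : ∀ u, 0 ≤ k u)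
    (hksupp : ∀ u, u ∉ Set.Icc (-1 : ℝ) 1 → k u = 0)
    (hkint : (∫ u, k u) = 1)
    (hkpos : ∀ u ∈ Set.Ioo (-1 : ℝ) 1, 0 < k u)
    (φb ψb : ℝ → ℝ)
    (hφψ : ∀ s ∈ Set.Ioc (-1 : ℝ) 1,
      φb s * (∫ u in Set.Icc (-1 : ℝ) s, k u)
        + ψb s * (∫ u in Set.Icc (-1 : ℝ) s, u * k u) = 1 ∧
      φb s * (∫ u in Set.Icc (-1 : ℝ) s, u * k u)
        + ψb s * (∫ u in Set.Icc (-1 : ℝ) s, u ^ 2 * k u) = 0)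
    (lam : ℝ → ℝ) (hbd : ∃ K : ℝ, ∀ x, |lam x| ≤ K)
    (hucont : UniformContinuous lam) :
    Tendsto
      (fun b : ℝ => ⨆ x ∈ Set.Icc (0 : ℝ) b,
        |(∫ y in Set.Icc (-1 : ℝ) (x / b),
            (φb (x / b) * k y + ψb (x / b) * (y * k y)) * lam (x - b * y)) - lam x|)
      (nhdsWithin 0 (Set.Ioi 0)) (nhds 0) := by
  obtain ⟨M, hM, hMb⟩ := bk_coef_bound k hkcont hk0 hkpos
  have hki : Integrable k := by
    by_contra h
    rw [integral_undef h] at hkint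
    norm_num at hkint
  rw [Metric.tendsto_nhdsWithin_nhds]
  intro ε hε
  set η := ε / (2 * (2 * M + 1)) with hη
  have hηpos : 0 < η := by positivity
  obtain ⟨δ, hδ, hlam⟩ := Metric.uniformContinuous_iff.1 hucont η hηpos
  refine ⟨δ, hδ, ?_⟩
  intro b hb hbδ
  have hb0 : 0 < b := hb
  rw [Real.dist_eq, sub_zero, abs_of_pos hb0] at hbδ
  have key : ∀ x ∈ Set.Icc (0 : ℝ) b,
      |(∫ y in Set.Icc (-1 : ℝ) (x / b),
            (φb (x / b) * k y + ψb (x / b) * (y * k y)) * lam (x - b * y)) - lam x| ≤ ε / 2 := by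
    intro x hx
    have hs : x / b ∈ Icc (0 : ℝ) 1 := ⟨div_nonneg hx.1 hb0.le, (div_le_one hb0).2 hx.2⟩
    generalize x / b = s at hs
    obtain ⟨h1, h2⟩ := hφψ s ⟨by linarith [hs.1], hs.2⟩
    obtain ⟨hp, hq⟩ := hMb s hs _ _ h1 h2
    generalize φb s = p at *
    generalize ψb s = q at *
    have hlc : Continuous lam := hucont.continuous
    have i0 : IntegrableOn k (Icc (-1) s) := hkcont.integrableOn_Icc
    have i1 : IntegrableOn (fun u => u * k u) (Icc (-1) s) :=
      Continuous.integrableOn_Icc (by fun_prop)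
    have e0 : ∫ y in Icc (-1 : ℝ) s, (p * k y + q * (y * k y)) * lam x = lam x := by
      rw [integral_mul_const, integral_add (i0.const_mul _) (i1.const_mul _),
        integral_const_mul, integral_const_mul, h1, one_mul]
    have e1 : (∫ y in Icc (-1 : ℝ) s, (p * k y + q * (y * k y)) * lam (x - b * y)) - lam x
        = ∫ y in Icc (-1 : ℝ) s, (p * k y + q * (y * k y)) * (lam (x - b * y) - lam x) := by
      simp_rw [mul_sub]
      rw [integral_sub (Continuous.integrableOn_Icc (by fun_prop))
        (Continuous.integrableOn_Icc (by fun_prop)), e0]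
    rw [e1]
    have e2 : ‖∫ y in Icc (-1 : ℝ) s, (p * k y + q * (y * k y)) * (lam (x - b * y) - lam x)‖
        ≤ ∫ y in Icc (-1 : ℝ) s, (2 * M * η) * k y := by
      apply norm_integral_le_of_norm_le (i0.const_mul _)
      refine (ae_restrict_iff' measurableSet_Icc).2 (Eventually.of_forall fun y hy => ?_)
      have hy1 : |y| ≤ 1 := abs_le.2 ⟨hy.1, hy.2.trans hs.2⟩
      have hl : |lam (x - b * y) - lam x| ≤ η := by
        have := hlam (a := x - b * y) (b := x) (by
          rw [Real.dist_eq, sub_sub_cancel_left, abs_neg, abs_mul, abs_of_pos hb0]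
          nlinarith)
        exact this.le
      have hc : |p + q * y| ≤ 2 * M := by
        calc |p + q * y| ≤ |p| + |q * y| := abs_add_le _ _
          _ = |p| + |q| * |y| := by rw [abs_mul]
          _ ≤ M + M * 1 := by gcongr
          _ = 2 * M := by ring
      rw [Real.norm_eq_abs, show (p * k y + q * (y * k y)) * (lam (x - b * y) - lam x)
        = (p + q * y) * (lam (x - b * y) - lam x) * k y by ring, abs_mul, abs_mul,
        abs_of_nonneg (hk0 y)]
      have := hk0 y
      gcongr
    rw [integral_const_mul] at e2
    have e3 : ∫ y in Icc (-1 : ℝ) s, k y ≤ 1 := by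
      rw [← hkint]
      exact setIntegral_le_integral hki (Eventually.of_forall hk0)
    have e4 : 2 * M * η * ∫ y in Icc (-1 : ℝ) s, k y ≤ 2 * M * η * 1 := by gcongr
    have e5 : (2 * M + 1) * η = ε / 2 := by rw [hη]; field_simp
    rw [Real.norm_eq_abs] at e2
    nlinarith
  rw [Real.dist_eq, sub_zero, abs_of_nonneg
    (Real.iSup_nonneg fun x => Real.iSup_nonneg fun _ => abs_nonneg _)]
  refine lt_of_le_of_lt (Real.iSup_le (fun x => Real.iSup_le (fun hx => key x hx) ?_) ?_)
    (half_lt_self hε) <;> positivity
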